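/- Let A be a C*-algebra and B a closed *-subalgebra of A. For positive functionals f and g on B, the following are equivalent: f is absolutely continuous with respect to g if and only if there exist norm-preserving positive extensions f̃ and g̃ of f and g to A such that f̃ is absolutely continuous with respect to g̃. -/

import Mathlib

/-!
Evaluating a positive functional along an approximate unit computes its norm, so the norm is
additive on positive functionals and norm-preserving extensions are closed under sums, nonnegative
multiples and convergent series. If `f ≪ g`, the increments `dₙ` of the approximating sequence
give a norm-convergent series `f = ∑ dₙ` with `dₙ ≤ αₙ • g`, and for suitable weights `cₙ > 0` the
series `e = ∑ cₙ • dₙ` converges to a functional below `g`. Norm-preserving extensions `Dₙ` of `dₙ`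
and `H` of `g - e` then yield the extensions `F = ∑ Dₙ` of `f` and `G = ∑ cₙ • Dₙ + H` of `g`, for
which `Dₙ ≤ cₙ⁻¹ • G`. Conversely, absolute continuity restricts to subalgebras.

Norm-preserving extensions exist because a functional on a unital algebra with `F 1 = ‖F‖` is
positive; a Hahn–Banach extension (of equal norm) of a positive functional to the unitization of `A`
has this property because `‖2 • (e⋆ * e) - 1‖ ≤ 1` whenever `‖e‖ ≤ 1`.
-/

open scoped ComplexOrder

section CStarContinuousDefs

variable {A : Type} [NonUnitalCStarAlgebra A]

/-- A (continuous) linear functional on a C⋆-algebra is positive if `0 ≤ f (a⋆ * a)` for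
every `a`. -/
def IsPosFnL (f : A →L[ℂ] ℂ) : Prop := ∀ a : A, 0 ≤ f (star a * a)

/-- Order on positive functionals: `f ≤ g` iff `g - f` is positive. -/
def FnLEL (f g : A →L[ℂ] ℂ) : Prop := IsPosFnL (g - f)

/-- Absolute continuity `f ≪ g`: `f` is the pointwise limit of an increasing sequence of
positive functionals `fₙ` with `fₙ ≤ αₙ • g` for some positive reals `αₙ`. -/
def AbsContL (f g : A →L[ℂ] ℂ) : Prop :=
  ∃ (fn : ℕ → (A →L[ℂ] ℂ)) (α : ℕ → ℝ),
    (∀ n, IsPosFnL (fn n)) ∧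
    (∀ n, 0 < α n) ∧
    (∀ n, FnLEL (fn n) (fn (n + 1))) ∧
    (∀ n, FnLEL (fn n) (((α n : ℂ)) • g)) ∧
    (∀ a : A, Filter.Tendsto (fun n => fn n a) Filter.atTop (nhds (f a)))

variable (B : NonUnitalStarSubalgebra ℂ A) [IsClosed (B : Set A)]

/-- `ft` is a norm-preserving positive extension to `A` of the positive functional `f`
defined on the closed `⋆`-subalgebra `B`. -/
def IsNormPresExt (f : ↥B →L[ℂ] ℂ) (ft : A →L[ℂ] ℂ) : Prop :=
  IsPosFnL ft ∧ (∀ b : ↥B, ft ↑b = f b) ∧ ‖ft‖ = ‖f‖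

end CStarContinuousDefs

open Filter Finset Topology
open scoped CStarAlgebra

/-- The continuous linear map underlying a `⋆`-homomorphism of C⋆-algebras; it serves to restrict
functionals along `⋆`-homomorphisms. -/
noncomputable def starAlgHomCLM {A B : Type*} [NonUnitalCStarAlgebra A] [NonUnitalCStarAlgebra B]
    (φ : B →⋆ₙₐ[ℂ] A) : B →L[ℂ] A :=
  ⟨(φ : B →ₗ[ℂ] A), map_continuous φ⟩

@[simp]
lemma starAlgHomCLM_apply {A B : Type*} [NonUnitalCStarAlgebra A] [NonUnitalCStarAlgebra B]
    (φ : B →⋆ₙₐ[ℂ] A) (b : B) : starAlgHomCLM φ b = φ b :=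
  rfl

lemma norm_comp_starAlgHomCLM_le {A B : Type*} [NonUnitalCStarAlgebra A]
    [NonUnitalCStarAlgebra B] (f : A →L[ℂ] ℂ) (φ : B →⋆ₙₐ[ℂ] A) :
    ‖f ∘L starAlgHomCLM φ‖ ≤ ‖f‖ :=
  ContinuousLinearMap.opNorm_le_bound _ (norm_nonneg f) fun b =>
    f.le_opNorm_of_le (NonUnitalStarAlgHom.norm_apply_le φ b)

section PositiveFunctionals

variable {A B : Type} [NonUnitalCStarAlgebra A] [NonUnitalCStarAlgebra B]

lemma IsPosFnL.add {f g : A →L[ℂ] ℂ} (hf : IsPosFnL f) (hg : IsPosFnL g) : IsPosFnL (f + g) :=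
  fun a => add_nonneg (hf a) (hg a)

lemma IsPosFnL.smul {f : A →L[ℂ] ℂ} (hf : IsPosFnL f) {c : ℂ} (hc : 0 ≤ c) :
    IsPosFnL (c • f) :=
  fun a => mul_nonneg hc (hf a)

lemma IsPosFnL.sum {ι : Type*} {d : ι → A →L[ℂ] ℂ} (hd : ∀ i, IsPosFnL (d i)) (s : Finset ι) :
    IsPosFnL (∑ i ∈ s, d i) := fun a => by
  rw [_root_.sum_apply]
  exact sum_nonneg fun i _ => hd i a

lemma IsPosFnL.comp {f : A →L[ℂ] ℂ} (hf : IsPosFnL f) (φ : B →⋆ₙₐ[ℂ] A) :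
    IsPosFnL (f ∘L starAlgHomCLM φ) := fun b => by
  simpa [map_star] using hf (φ b)

lemma fnLEL_iff {f g : A →L[ℂ] ℂ} :
    FnLEL f g ↔ ∀ a, f (star a * a) ≤ g (star a * a) :=
  forall_congr' fun _ => sub_nonneg

lemma FnLEL.trans {f g h : A →L[ℂ] ℂ} (hfg : FnLEL f g) (hgh : FnLEL g h) : FnLEL f h :=
  fnLEL_iff.mpr fun a => (fnLEL_iff.mp hfg a).trans (fnLEL_iff.mp hgh a)

lemma FnLEL.smul {f g : A →L[ℂ] ℂ} (hfg : FnLEL f g) {c : ℂ} (hc : 0 ≤ c) :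
    FnLEL (c • f) (c • g) :=
  fnLEL_iff.mpr fun a => mul_le_mul_of_nonneg_left (fnLEL_iff.mp hfg a) hc

lemma FnLEL.sum {ι : Type*} {d e : ι → A →L[ℂ] ℂ} (h : ∀ i, FnLEL (d i) (e i)) (s : Finset ι) :
    FnLEL (∑ i ∈ s, d i) (∑ i ∈ s, e i) := fnLEL_iff.mpr fun a => by
  simp only [_root_.sum_apply]
  exact sum_le_sum fun i _ => fnLEL_iff.mp (h i) a

lemma FnLEL.hasSum {ι : Type*} {d e : ι → A →L[ℂ] ℂ} {f g : A →L[ℂ] ℂ}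
    (h : ∀ i, FnLEL (d i) (e i)) (hf : HasSum d f) (hg : HasSum e g) : FnLEL f g :=
  fnLEL_iff.mpr fun a =>
    hasSum_le (fun i => fnLEL_iff.mp (h i) a) ((ContinuousLinearMap.apply ℂ ℂ _).hasSum hf)
      ((ContinuousLinearMap.apply ℂ ℂ _).hasSum hg)

lemma IsPosFnL.hasSum {ι : Type*} {d : ι → A →L[ℂ] ℂ} {f : A →L[ℂ] ℂ}
    (hd : ∀ i, IsPosFnL (d i)) (hf : HasSum d f) : IsPosFnL f :=
  fun a => ((ContinuousLinearMap.apply ℂ ℂ _).hasSum hf).nonneg fun i => hd i a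

lemma IsPosFnL.le_hasSum {ι : Type*} {d : ι → A →L[ℂ] ℂ} {f : A →L[ℂ] ℂ}
    (hd : ∀ i, IsPosFnL (d i)) (hf : HasSum d f) (i : ι) : FnLEL (d i) f :=
  fnLEL_iff.mpr fun a =>
    _root_.le_hasSum ((ContinuousLinearMap.apply ℂ ℂ _).hasSum hf) i fun j _ => hd j a

end PositiveFunctionals

section ApproximateUnit

variable {A : Type} [NonUnitalCStarAlgebra A] {f g : A →L[ℂ] ℂ}

lemma norm_star_mul_self_le_one {E : Type*} [NonUnitalNormedRing E] [StarRing E] [CStarRing E]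
    {a : E} (ha : ‖a‖ ≤ 1) : ‖star a * a‖ ≤ 1 := by
  rw [CStarRing.norm_star_mul_self]
  exact mul_le_one₀ ha (norm_nonneg a) ha

lemma re_map_le_opNorm {E : Type*} [SeminormedAddCommGroup E] [NormedSpace ℂ E] (f : E →L[ℂ] ℂ)
    {a : E} (ha : ‖a‖ ≤ 1) : (f a).re ≤ ‖f‖ :=
  (Complex.re_le_norm _).trans (f.unit_le_opNorm a ha)

lemma IsPosFnL.map_nonneg [PartialOrder A] [StarOrderedRing A] (hf : IsPosFnL f) {a : A}
    (ha : 0 ≤ a) : 0 ≤ f a := by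
  obtain ⟨b, rfl⟩ := CStarAlgebra.nonneg_iff_eq_star_mul_self.mp ha
  exact hf b

lemma IsPosFnL.norm_map_star_mul_sq_le (hf : IsPosFnL f) (a b : A) :
    ‖f (star a * b)‖ ^ 2 ≤ (f (star a * a)).re * (f (star b * b)).re := by
  let _ := CStarAlgebra.spectralOrder A
  have _ := CStarAlgebra.spectralOrderedRing A
  let φ : A →ₚ[ℂ] ℂ := .mk₀ f fun _ => hf.map_nonneg
  have h : ‖f (star a * b)‖ ≤ √(f (star a * a)).re * √(f (star b * b)).re :=
    norm_inner_le_norm (𝕜 := ℂ) (φ.toPreGNS a) (φ.toPreGNS b)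
  rw [← Real.sqrt_mul (hf a).1] at h
  exact (Real.le_sqrt (norm_nonneg _) (mul_nonneg (hf a).1 (hf b).1)).mp h

lemma IsPosFnL.tendsto_re_map_approximateUnit [PartialOrder A] [StarOrderedRing A]
    (hf : IsPosFnL f) :
    Tendsto (fun e => (f (star e * e)).re) (CStarAlgebra.approximateUnit A) (𝓝 ‖f‖) := by
  have hau := CStarAlgebra.increasingApproximateUnit A
  refine tendsto_order.mpr ⟨fun r hr => ?_, fun r hr => ?_⟩
  · rcases lt_or_ge r 0 with hr0 | hr0
    · exact .of_forall fun e => hr0.trans_le (hf e).1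
    have hf0 : 0 < ‖f‖ := hr0.trans_lt hr
    obtain ⟨b, hb1, hb⟩ : ∃ b, ‖b‖ < 1 ∧ √(r * ‖f‖) < ‖f b‖ := by
      refine f.exists_lt_apply_of_lt_opNorm ?_
      rw [Real.sqrt_lt' hf0, sq]
      gcongr
    have hlim : Tendsto (fun e => ‖f (e * b)‖) (CStarAlgebra.approximateUnit A) (𝓝 ‖f b‖) :=
      (f.continuous.norm.tendsto b).comp (hau.tendsto_mul_right b)
    filter_upwards [hlim.eventually_const_lt hb, hau.eventually_star_eq] with e he he_star
    refine lt_of_mul_lt_mul_right ?_ hf0.le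
    calc r * ‖f‖ < ‖f (star e * b)‖ ^ 2 := by
          rw [he_star]
          exact Real.lt_sq_of_sqrt_lt he
      _ ≤ (f (star e * e)).re * (f (star b * b)).re := hf.norm_map_star_mul_sq_le e b
      _ ≤ (f (star e * e)).re * ‖f‖ :=
          mul_le_mul_of_nonneg_left (re_map_le_opNorm f (norm_star_mul_self_le_one hb1.le))
            (hf e).1
  · filter_upwards [hau.eventually_norm] with e he
    exact (re_map_le_opNorm f (norm_star_mul_self_le_one he)).trans_lt hr

lemma IsPosFnL.norm_add (hf : IsPosFnL f) (hg : IsPosFnL g) : ‖f + g‖ = ‖f‖ + ‖g‖ := by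
  let _ := CStarAlgebra.spectralOrder A
  have _ := CStarAlgebra.spectralOrderedRing A
  exact tendsto_nhds_unique (hf.add hg).tendsto_re_map_approximateUnit
    (hf.tendsto_re_map_approximateUnit.add hg.tendsto_re_map_approximateUnit)

lemma IsPosFnL.norm_sum {ι : Type*} {d : ι → A →L[ℂ] ℂ} (hd : ∀ i, IsPosFnL (d i))
    (s : Finset ι) : ‖∑ i ∈ s, d i‖ = ∑ i ∈ s, ‖d i‖ := by
  induction s using Finset.cons_induction with
  | empty => simp
  | cons i s hi ih => rw [sum_cons, sum_cons, (hd i).norm_add (.sum hd s), ih]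

lemma IsPosFnL.norm_le (hf : IsPosFnL f) (hfg : FnLEL f g) : ‖f‖ ≤ ‖g‖ := by
  have h := hf.norm_add hfg
  rw [add_sub_cancel] at h
  exact h ▸ le_add_of_nonneg_right (norm_nonneg _)

lemma IsPosFnL.hasSum_norm {ι : Type*} {d : ι → A →L[ℂ] ℂ} (hd : ∀ i, IsPosFnL (d i))
    (hf : HasSum d f) : HasSum (fun i => ‖d i‖) ‖f‖ :=
  (Tendsto.norm hf).congr (IsPosFnL.norm_sum hd)

lemma IsPosFnL.summable_norm_of_forall_sum_le {d : ℕ → A →L[ℂ] ℂ} (hd : ∀ n, IsPosFnL (d n))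
    (hle : ∀ n, FnLEL (∑ k ∈ range n, d k) f) : Summable fun n => ‖d n‖ :=
  summable_of_sum_range_le (fun _ => norm_nonneg _) fun n =>
    (IsPosFnL.norm_sum hd (range n)).symm.trans_le ((IsPosFnL.sum hd (range n)).norm_le (hle n))

lemma IsPosFnL.hasSum_of_tendsto {d : ℕ → A →L[ℂ] ℂ} (hd : ∀ n, IsPosFnL (d n))
    (hlim : ∀ a, Tendsto (fun n => (∑ k ∈ range n, d k) a) atTop (𝓝 (f a))) : HasSum d f := by
  have hle (n : ℕ) : FnLEL (∑ k ∈ range n, d k) f := fnLEL_iff.mpr fun a => by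
    refine Monotone.ge_of_tendsto (monotone_nat_of_le_succ fun m => ?_) (hlim (star a * a)) n
    rw [sum_range_succ]
    exact le_add_of_nonneg_right (hd m a)
  have hsum : HasSum d (∑' n, d n) :=
    (IsPosFnL.summable_norm_of_forall_sum_le hd hle).of_norm.hasSum
  have hf : f = ∑' n, d n := ContinuousLinearMap.ext fun a => tendsto_nhds_unique (hlim a)
    (((ContinuousLinearMap.apply ℂ ℂ a).continuous.tendsto _).comp hsum.tendsto_sum_nat)
  exact hf ▸ hsum

end ApproximateUnit

section UnitalAlgebras

lemma norm_two_smul_star_mul_self_sub_one_le {U : Type*} [CStarAlgebra U] {e : U}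
    (he : ‖e‖ ≤ 1) : ‖(2 : ℂ) • (star e * e) - 1‖ ≤ 1 := by
  let _ := CStarAlgebra.spectralOrder U
  have _ := CStarAlgebra.spectralOrderedRing U
  set y : U := (2 : ℂ) • (star e * e) - 1 with hy
  have hy_star : star y = y := by simp [hy]
  have he_le : e * star e ≤ 1 := by
    rw [← CStarAlgebra.norm_le_one_iff_of_nonneg _ (mul_star_self_nonneg e),
      CStarRing.norm_self_mul_star]
    exact mul_le_one₀ he (norm_nonneg e) he
  have hfactor : 1 - star y * y = star ((2 : ℂ) • e) * (1 - e * star e) * ((2 : ℂ) • e) := by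
    rw [hy_star, hy]
    simp only [two_smul, mul_sub, sub_mul, mul_add, add_mul, mul_one, one_mul, star_add, mul_assoc]
    abel
  have hyy : star y * y ≤ 1 :=
    sub_nonneg.mp (hfactor ▸ star_left_conjugate_nonneg (sub_nonneg.mpr he_le) _)
  rw [← CStarAlgebra.norm_le_one_iff_of_nonneg _ (star_mul_self_nonneg y),
    CStarRing.norm_star_mul_self, ← sq] at hyy
  exact (sq_le_one_iff₀ (norm_nonneg y)).mp hyy

lemma norm_add_algebraMap_mul_I_sq_le {U : Type*} [CStarAlgebra U] {x : U}
    (hx : IsSelfAdjoint x) (s : ℝ) :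
    ‖x + algebraMap ℂ U (s * Complex.I)‖ ^ 2 ≤ ‖x‖ ^ 2 + s ^ 2 := by
  cases subsingleton_or_nontrivial U
  · simp [Subsingleton.elim (_ : U) 0, sq_nonneg]
  set z : U := algebraMap ℂ U (s * Complex.I) with hz
  have hz_star : star z = -z := by
    rw [hz, ← algebraMap_star_comm, ← map_neg]
    simp
  have hmul : star (x + z) * (x + z) = x * x - z * z := by
    have hcomm : z * x = x * z := Algebra.commutes _ x
    rw [star_add, hx.star_eq, hz_star]
    noncomm_ring [hcomm]
  calc ‖x + z‖ ^ 2 = ‖x * x - z * z‖ := by rw [sq, ← CStarRing.norm_star_mul_self, hmul]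
    _ ≤ ‖x‖ * ‖x‖ + ‖z‖ * ‖z‖ :=
        (norm_sub_le _ _).trans (add_le_add (norm_mul_le _ _) (norm_mul_le _ _))
    _ = ‖x‖ ^ 2 + s ^ 2 := by
        rw [hz, norm_algebraMap']
        simp [sq]

variable {U : Type} [CStarAlgebra U] {F : U →L[ℂ] ℂ}

lemma im_map_eq_zero_of_map_one_eq_norm (hF : F 1 = ‖F‖) {x : U} (hx : IsSelfAdjoint x) :
    (F x).im = 0 := by
  have hbound (s : ℝ) : ((F x).im + s * ‖F‖) ^ 2 ≤ ‖F‖ ^ 2 * (‖x‖ ^ 2 + s ^ 2) := by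
    set y := x + algebraMap ℂ U (s * Complex.I)
    have hy : (F y).im = (F x).im + s * ‖F‖ := by
      simp [y, Algebra.algebraMap_eq_smul_one, hF]
    calc ((F x).im + s * ‖F‖) ^ 2 = |(F y).im| ^ 2 := by rw [sq_abs, hy]
      _ ≤ (‖F‖ * ‖y‖) ^ 2 := by
          gcongr
          exact (Complex.abs_im_le_norm _).trans (F.le_opNorm y)
      _ ≤ ‖F‖ ^ 2 * (‖x‖ ^ 2 + s ^ 2) := by
          rw [mul_pow]
          gcongr
          exact norm_add_algebraMap_mul_I_sq_le hx s
  -- The `s ^ 2` terms cancel, leaving an affine function of `s` that is bounded above.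
  by_contra him
  have hs := hbound (‖F‖ * ‖x‖ ^ 2 / (2 * (F x).im))
  have hcross : 2 * (F x).im * (‖F‖ * ‖x‖ ^ 2 / (2 * (F x).im) * ‖F‖) = ‖F‖ ^ 2 * ‖x‖ ^ 2 := by
    field_simp
  have him_sq : 0 < (F x).im ^ 2 := sq_pos_of_ne_zero him
  nlinarith

lemma re_map_nonneg_of_map_one_eq_norm [PartialOrder U] [StarOrderedRing U] (hF : F 1 = ‖F‖)
    {x : U} (hx : 0 ≤ x) : 0 ≤ (F x).re := by
  set y := algebraMap ℝ U ‖x‖ - x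
  have hy_norm : ‖y‖ ≤ ‖x‖ := by
    have hxy : 0 ≤ y := sub_nonneg.mpr (IsSelfAdjoint.of_nonneg hx).le_algebraMap_norm_self
    rw [CStarAlgebra.norm_le_iff_le_algebraMap y (norm_nonneg x) hxy]
    exact sub_le_self _ hx
  have hy : (F y).re = ‖x‖ * ‖F‖ - (F x).re := by
    simp [y, Algebra.algebraMap_eq_smul_one, hF]
  have hle : (F y).re ≤ ‖F‖ * ‖x‖ := (Complex.re_le_norm _).trans (F.le_opNorm_of_le hy_norm)
  linarith

lemma isPosFnL_of_map_one_eq_norm (hF : F 1 = ‖F‖) : IsPosFnL F := fun a => by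
  let _ := CStarAlgebra.spectralOrder U
  have _ := CStarAlgebra.spectralOrderedRing U
  exact Complex.nonneg_iff.mpr ⟨re_map_nonneg_of_map_one_eq_norm hF (star_mul_self_nonneg a),
    (im_map_eq_zero_of_map_one_eq_norm hF (.star_mul_self a)).symm⟩

lemma map_one_eq_norm_of_extends {B : Type} [NonUnitalCStarAlgebra B] {f : B →L[ℂ] ℂ}
    (hf : IsPosFnL f) (φ : B →⋆ₙₐ[ℂ] U) (hFf : ∀ b, F (φ b) = f b) (hnorm : ‖F‖ = ‖f‖) :
    F 1 = ‖F‖ := by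
  let _ := CStarAlgebra.spectralOrder B
  have _ := CStarAlgebra.spectralOrderedRing B
  have hle (e : B) (he : ‖e‖ ≤ 1) : 2 * (f (star e * e)).re - (F 1).re ≤ ‖F‖ := by
    have hφe : ‖φ e‖ ≤ 1 := (NonUnitalStarAlgHom.norm_apply_le φ e).trans he
    simpa [← map_star, ← map_mul, hFf] using
      re_map_le_opNorm F (norm_two_smul_star_mul_self_sub_one_le hφe)
  have hlim : 2 * ‖f‖ - (F 1).re ≤ ‖F‖ :=
    le_of_tendsto ((hf.tendsto_re_map_approximateUnit.const_mul 2).sub_const _)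
      ((CStarAlgebra.increasingApproximateUnit B).eventually_norm.mono hle)
  have hone : ‖F 1‖ ≤ ‖F‖ := F.unit_le_opNorm 1 (by nontriviality U; simp)
  have hre : ‖F‖ ≤ (F 1).re := by linarith
  have hF1 : 0 ≤ F 1 :=
    Complex.re_eq_norm.mp ((Complex.re_le_norm _).antisymm (hone.trans hre))
  rw [Complex.eq_coe_norm_of_nonneg hF1, hone.antisymm (hre.trans (Complex.re_le_norm _))]

end UnitalAlgebras

section Extensions

lemma exists_extension_norm_eq_of_linearIsometry {𝕜 E F : Type*} [RCLike 𝕜]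
    [NormedAddCommGroup E] [NormedSpace 𝕜 E] [NormedAddCommGroup F] [NormedSpace 𝕜 F]
    (i : E →ₗᵢ[𝕜] F) (f : E →L[𝕜] 𝕜) : ∃ g : F →L[𝕜] 𝕜, (∀ x, g (i x) = f x) ∧ ‖g‖ = ‖f‖ := by
  let e := i.equivRange
  obtain ⟨g, hg, hnorm⟩ := exists_extension_norm_eq i.range (f ∘L (e.symm : i.range →L[𝕜] E))
  refine ⟨g, fun x => ?_, hnorm.trans (f.opNorm_comp_linearIsometryEquiv e.symm)⟩
  simpa [e] using! hg (e x)

lemma IsPosFnL.exists_extension_of_unital {B U : Type} [NonUnitalCStarAlgebra B] [CStarAlgebra U]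
    {f : B →L[ℂ] ℂ} (hf : IsPosFnL f) (φ : B →⋆ₙₐ[ℂ] U) (hφ : Function.Injective φ) :
    ∃ F : U →L[ℂ] ℂ, IsPosFnL F ∧ (∀ b, F (φ b) = f b) ∧ ‖F‖ = ‖f‖ := by
  obtain ⟨F, hF, hnorm⟩ := exists_extension_norm_eq_of_linearIsometry
    ⟨(φ : B →ₗ[ℂ] U), NonUnitalStarAlgHom.norm_map φ hφ⟩ f
  exact ⟨F, isPosFnL_of_map_one_eq_norm (map_one_eq_norm_of_extends hf φ hF hnorm), hF, hnorm⟩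

variable {A : Type} [NonUnitalCStarAlgebra A] {B : NonUnitalStarSubalgebra ℂ A}
  [IsClosed (B : Set A)]

lemma comp_subtype_eq_of_extends {f : B →L[ℂ] ℂ} {F : A →L[ℂ] ℂ} (h : ∀ b : B, F b = f b) :
    F ∘L starAlgHomCLM (NonUnitalStarSubalgebraClass.subtype B) = f :=
  ContinuousLinearMap.ext h

lemma IsPosFnL.exists_isNormPresExt {f : B →L[ℂ] ℂ} (hf : IsPosFnL f) :
    ∃ F : A →L[ℂ] ℂ, IsNormPresExt B f F := by
  let j := Unitization.inrNonUnitalStarAlgHom ℂ A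
  obtain ⟨F, hF, hFf, hnorm⟩ := hf.exists_extension_of_unital
    (j.comp (NonUnitalStarSubalgebraClass.subtype B))
    (Unitization.inr_injective.comp Subtype.val_injective)
  refine ⟨F ∘L starAlgHomCLM j, hF.comp j, hFf, le_antisymm ?_ ?_⟩
  · exact hnorm ▸ norm_comp_starAlgHomCLM_le F j
  · conv_lhs => rw [← comp_subtype_eq_of_extends (F := F ∘L starAlgHomCLM j) hFf]
    exact norm_comp_starAlgHomCLM_le _ _

lemma IsNormPresExt.isPosFnL {f : B →L[ℂ] ℂ} {F : A →L[ℂ] ℂ} (h : IsNormPresExt B f F) :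
    IsPosFnL f :=
  comp_subtype_eq_of_extends h.2.1 ▸ h.1.comp _

lemma IsNormPresExt.smul {f : B →L[ℂ] ℂ} {F : A →L[ℂ] ℂ} (h : IsNormPresExt B f F) {c : ℂ}
    (hc : 0 ≤ c) : IsNormPresExt B (c • f) (c • F) :=
  ⟨h.1.smul hc, fun b => congrArg (c * ·) (h.2.1 b), by rw [norm_smul, norm_smul, h.2.2]⟩

lemma IsNormPresExt.add {f g : B →L[ℂ] ℂ} {F G : A →L[ℂ] ℂ} (hf : IsNormPresExt B f F)
    (hg : IsNormPresExt B g G) : IsNormPresExt B (f + g) (F + G) :=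
  ⟨hf.1.add hg.1, fun b => congrArg₂ (· + ·) (hf.2.1 b) (hg.2.1 b), by
    rw [hf.1.norm_add hg.1, hf.isPosFnL.norm_add hg.isPosFnL, hf.2.2, hg.2.2]⟩

lemma IsNormPresExt.exists_hasSum {ι : Type*} {d : ι → B →L[ℂ] ℂ} {D : ι → A →L[ℂ] ℂ}
    {f : B →L[ℂ] ℂ} (h : ∀ i, IsNormPresExt B (d i) (D i)) (hf : HasSum d f) :
    ∃ F, HasSum D F ∧ IsNormPresExt B f F := by
  have hnorm : HasSum (fun i => ‖D i‖) ‖f‖ := by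
    simpa only [(h _).2.2] using IsPosFnL.hasSum_norm (fun i => (h i).isPosFnL) hf
  have hF : HasSum D (∑' i, D i) := hnorm.summable.of_norm.hasSum
  refine ⟨∑' i, D i, hF, .hasSum (fun i => (h i).1) hF, fun b => ?_, ?_⟩
  · refine ((ContinuousLinearMap.apply ℂ ℂ (b : A)).hasSum hF).unique ?_
    exact ((ContinuousLinearMap.apply ℂ ℂ b).hasSum hf).congr_fun fun i => (h i).2.1 b
  · exact (IsPosFnL.hasSum_norm (fun i => (h i).1) hF).unique hnorm

end Extensions

section AbsoluteContinuity

variable {A : Type} [NonUnitalCStarAlgebra A]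

lemma absContL_iff_exists_hasSum {f g : A →L[ℂ] ℂ} :
    AbsContL f g ↔ ∃ (d : ℕ → A →L[ℂ] ℂ) (α : ℕ → ℝ), (∀ n, IsPosFnL (d n)) ∧ (∀ n, 0 < α n) ∧
      (∀ n, FnLEL (d n) ((α n : ℂ) • g)) ∧ HasSum d f := by
  constructor
  · rintro ⟨u, α, hu, hα, hmono, hle, hlim⟩
    let d (n : ℕ) : A →L[ℂ] ℂ := if n = 0 then u 0 else u n - u (n - 1)
    have hd : ∀ n, IsPosFnL (d n)
      | 0 => hu 0
      | n + 1 => hmono n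
    have hdu : ∀ n, FnLEL (d n) (u n)
      | 0 => fnLEL_iff.mpr fun _ => le_rfl
      | n + 1 => fnLEL_iff.mpr fun a => sub_le_self _ (hu n a)
    refine ⟨d, α, hd, hα, fun n => (hdu n).trans (hle n),
      IsPosFnL.hasSum_of_tendsto hd fun a => ?_⟩
    rw [← tendsto_add_atTop_iff_nat 1]
    simpa only [d, ← eq_sum_range_sub'] using hlim a
  · rintro ⟨d, α, hd, hα, hle, hf⟩
    refine ⟨fun n => ∑ k ∈ range (n + 1), d k, fun n => ∑ k ∈ range (n + 1), α k,
      fun n => .sum hd _, fun n => sum_pos (fun k _ => hα k) nonempty_range_add_one,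
      fun n => ?_, fun n => ?_, fun a => ?_⟩
    · simp only [sum_range_succ _ (n + 1)]
      exact fnLEL_iff.mpr fun a => le_add_of_nonneg_right (hd (n + 1) a)
    · have hsmul : ((∑ k ∈ range (n + 1), α k : ℝ) : ℂ) • g =
          ∑ k ∈ range (n + 1), (α k : ℂ) • g := by
        ext
        simp [sum_mul]
      exact hsmul ▸ .sum hle _
    · exact ((ContinuousLinearMap.apply ℂ ℂ a).continuous.tendsto _).comp
        (hf.tendsto_sum_nat.comp (tendsto_add_atTop_nat 1))

lemma exists_weights_hasSum_le {d : ℕ → A →L[ℂ] ℂ} {g : A →L[ℂ] ℂ} {α : ℕ → ℝ}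
    (hd : ∀ n, IsPosFnL (d n)) (hα : ∀ n, 0 < α n) (hle : ∀ n, FnLEL (d n) ((α n : ℂ) • g)) :
    ∃ (c : ℕ → ℝ) (e : A →L[ℂ] ℂ), (∀ n, 0 < c n) ∧ HasSum (fun n => (c n : ℂ) • d n) e ∧
      FnLEL e g := by
  let q (n : ℕ) : ℝ := (1 / 2) ^ n / 2
  have hq_pos (n : ℕ) : 0 < q n := by positivity
  have hq : HasSum q 1 := by simpa [q] using hasSum_geometric_two.div_const 2
  have hqg : HasSum (fun n => (q n : ℂ) • g) g := by
    simpa only [Complex.ofReal_one, one_smul] using (Complex.hasSum_ofReal.mpr hq).smul_const g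
  let c (n : ℕ) : ℝ := q n / α n
  have hc (n : ℕ) : 0 < c n := div_pos (hq_pos n) (hα n)
  have hcα (n : ℕ) : (c n : ℂ) * α n = q n := mod_cast div_mul_cancel₀ (q n) (hα n).ne'
  have hc_nonneg (n : ℕ) : 0 ≤ (c n : ℂ) := mod_cast (hc n).le
  have hcd (n : ℕ) : FnLEL ((c n : ℂ) • d n) ((q n : ℂ) • g) := by
    rw [← hcα, mul_smul]
    exact (hle n).smul (hc_nonneg n)
  have hnorm (n : ℕ) : ‖(c n : ℂ) • d n‖ ≤ q n * ‖g‖ := by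
    simpa [norm_smul, abs_of_pos (hq_pos n)] using ((hd n).smul (hc_nonneg n)).norm_le (hcd n)
  have hsum := (Summable.of_norm_bounded (hq.summable.mul_right ‖g‖) hnorm).hasSum
  exact ⟨c, _, hc, hsum, .hasSum hcd hsum hqg⟩

lemma AbsContL.comp {B : Type} [NonUnitalCStarAlgebra B] {f g : A →L[ℂ] ℂ} (h : AbsContL f g)
    (φ : B →⋆ₙₐ[ℂ] A) : AbsContL (f ∘L starAlgHomCLM φ) (g ∘L starAlgHomCLM φ) := by
  obtain ⟨u, α, hu, hα, hmono, hle, hlim⟩ := h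
  exact ⟨fun n => u n ∘L starAlgHomCLM φ, α, fun n => (hu n).comp φ, hα,
    fun n => (hmono n).comp φ, fun n => (hle n).comp φ, fun b => hlim (φ b)⟩

lemma AbsContL.exists_isNormPresExt {B : NonUnitalStarSubalgebra ℂ A} [IsClosed (B : Set A)]
    {f g : B →L[ℂ] ℂ} (h : AbsContL f g) :
    ∃ F G : A →L[ℂ] ℂ, IsNormPresExt B f F ∧ IsNormPresExt B g G ∧ AbsContL F G := by
  obtain ⟨d, α, hd, hα, hle, hf⟩ := absContL_iff_exists_hasSum.mp h
  obtain ⟨c, e, hc, he, heg⟩ := exists_weights_hasSum_le hd hα hle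
  have hc_nonneg (n : ℕ) : 0 ≤ (c n : ℂ) := mod_cast (hc n).le
  choose D hD using fun n => (hd n).exists_isNormPresExt (A := A)
  have hcD (n : ℕ) : IsNormPresExt B ((c n : ℂ) • d n) ((c n : ℂ) • D n) :=
    (hD n).smul (hc_nonneg n)
  obtain ⟨F, hF, hfF⟩ := IsNormPresExt.exists_hasSum hD hf
  obtain ⟨E, hE, heE⟩ := IsNormPresExt.exists_hasSum hcD he
  obtain ⟨H, hH⟩ := IsPosFnL.exists_isNormPresExt (A := A) heg
  have hEG : FnLEL E (E + H) := fnLEL_iff.mpr fun a => le_add_of_nonneg_right (hH.1 a)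
  have hcDG (n : ℕ) : FnLEL ((c n : ℂ) • D n) (E + H) :=
    (IsPosFnL.le_hasSum (fun k => (hcD k).1) hE n).trans hEG
  refine ⟨F, E + H, hfF, add_sub_cancel e g ▸ heE.add hH, absContL_iff_exists_hasSum.mpr
    ⟨D, fun n => (c n)⁻¹, fun n => (hD n).1, fun n => inv_pos.mpr (hc n), fun n => ?_, hF⟩⟩
  have hcinv : (((c n)⁻¹ : ℝ) : ℂ) * c n = 1 := mod_cast inv_mul_cancel₀ (hc n).ne'
  have hcinv_nonneg : 0 ≤ (((c n)⁻¹ : ℝ) : ℂ) := mod_cast (inv_pos.mpr (hc n)).le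
  simpa only [smul_smul, hcinv, one_smul] using (hcDG n).smul hcinv_nonneg

end AbsoluteContinuity

/-- **Lemma 2.6 (2)**: for positive functionals `f, g` on a closed `⋆`-subalgebra `B` of a
C⋆-algebra `A`, `f ≪ g` holds iff there exist norm-preserving positive extensions
`f̃, g̃` of `f` and `g` to `A` with `f̃ ≪ g̃`. -/
theorem absCont_iff_exists_normPres_extensions
    {A : Type} [NonUnitalCStarAlgebra A]
    (B : NonUnitalStarSubalgebra ℂ A) [IsClosed (B : Set A)]
    (f g : ↥B →L[ℂ] ℂ) (hf : IsPosFnL f) (hg : IsPosFnL g) :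
    AbsContL f g ↔
      ∃ ft gt : A →L[ℂ] ℂ, IsNormPresExt B f ft ∧ IsNormPresExt B g gt ∧ AbsContL ft gt := by
  refine ⟨fun h => h.exists_isNormPresExt, fun ⟨ft, gt, hft, hgt, h⟩ => ?_⟩
  rw [← comp_subtype_eq_of_extends hft.2.1, ← comp_subtype_eq_of_extends hgt.2.1]
  exact h.comp (NonUnitalStarSubalgebraClass.subtype B)
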